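/- Let λ = λ^0 + lλ̄ be a partition which is not l-restricted (i.e. λ̄ ≠ 0), where λ^0 is l-restricted and λ̄ is a partition, and assume ℓ(λ̄) ≤ ℓ(λ^0). Set μ = (λ^0)' and assume μ is edge l-disconnected. Then there exists an index i such that: (i) S = (i, λ_i) is a suitable node of λ, S_0 = (i, λ^0_i) is a suitable node of λ^0, and the partition (λ^0)_{S_0} is l-restricted; and (ii) R = (λ^0_i, i) is a co-suitable node of μ such that μ_R is l-regular and ℓ(Mull(μ)) = ℓ(Mull(μ_R)). -/

import Mathlib

noncomputable section

/-- `p : ℕ → ℕ` represents the partition `λ` with `p i = λ_{i+1}` (0-indexed parts):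
a weakly decreasing, eventually zero sequence. -/
def IsPartition (p : ℕ → ℕ) : Prop :=
  (∀ i j, i ≤ j → p j ≤ p i) ∧ ∃ N, ∀ i, N ≤ i → p i = 0

/-- `ℓ(λ)`, the number of nonzero parts. -/
def plen (p : ℕ → ℕ) : ℕ := sInf {N | p N = 0}

/-- the degree (number of boxes) of the partition. -/
def pdeg (p : ℕ → ℕ) : ℕ := ∑ i ∈ Finset.range (plen p), p i

/-- `λ` is `l`-regular: no `l` consecutive parts are equal and nonzero. -/
def IsLRegular (l : ℕ) (p : ℕ → ℕ) : Prop :=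
  ∀ i, p i ≠ 0 → p (i + l - 1) ≠ p i

/-- `λ` is `l`-restricted: `λ_i - λ_{i+1} < l` for all `i`. -/
def IsLRestricted (l : ℕ) (p : ℕ → ℕ) : Prop :=
  ∀ i, p i - p (i + 1) < l

/-- the transpose (conjugate) partition. -/
def conjP (p : ℕ → ℕ) : ℕ → ℕ :=
  fun j => ((Finset.range (plen p)).filter fun i => j < p i).card

/-- the minimal `h ≥ 1` with `λ_1 - λ_{h+1} + h ≥ l`: when `e(λ) > l`, the first
`l`-segment of the `l`-edge lies in rows `1, …, h`. -/
def firstSeg (l : ℕ) (p : ℕ → ℕ) : ℕ := sInf {h | 1 ≤ h ∧ l ≤ p 0 - p h + h}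

/-- removal of the `l`-edge (with fuel): if `e(λ) ≤ l` the whole edge is removed,
otherwise the first `l`-segment is removed from rows `1, …, h` (`h = firstSeg`) and one
recurses on `(λ_{h+1}, λ_{h+2}, …)`. -/
def removeLEdgeAux (l : ℕ) : ℕ → (ℕ → ℕ) → ℕ → ℕ
  | 0, _ => fun _ => 0
  | n + 1, p =>
    if p 0 = 0 then fun _ => 0
    else if p 0 + plen p - 1 ≤ l then fun i => p (i + 1) - 1
    else fun i =>
      if i + 1 < firstSeg l p then p (i + 1) - 1
      else if i + 1 = firstSeg l p then p 0 + firstSeg l p - 1 - l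
      else removeLEdgeAux l n (fun j => p (j + firstSeg l p)) (i - firstSeg l p)

/-- the partition obtained by removing the `l`-edge of `λ`. -/
def removeLEdge (l : ℕ) (p : ℕ → ℕ) : ℕ → ℕ := removeLEdgeAux l (plen p) p

/-- `e_l(λ)`, the number of nodes of the `l`-edge. -/
def elen (l : ℕ) (p : ℕ → ℕ) : ℕ := pdeg p - pdeg (removeLEdge l p)

/-- the length of `Mull(λ)` prescribed by the defining recursion of the Mullineux map. -/
def mullLen (l : ℕ) (p : ℕ → ℕ) : ℕ :=
  if l ∣ elen l p then elen l p - plen p else elen l p - plen p + 1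

/-- the Mullineux map (with fuel): `Mull(0) = 0` and, for `λ ≠ 0` `l`-regular with `ν`
obtained from `λ` by removing the `l`-edge, `Mull(λ)` is the unique `l`-regular partition
whose `l`-edge removal leaves `Mull(ν)` and whose length is `e_l(λ) - ℓ(λ)` if
`l ∣ e_l(λ)` and `e_l(λ) - ℓ(λ) + 1` otherwise. -/
def mullAux (l : ℕ) : ℕ → (ℕ → ℕ) → ℕ → ℕ
  | 0, _ => fun _ => 0
  | n + 1, p =>
    if p 0 = 0 then fun _ => 0
    else
      Classical.epsilon fun μ : ℕ → ℕ =>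
        IsPartition μ ∧ IsLRegular l μ ∧
          removeLEdge l μ = mullAux l n (removeLEdge l p) ∧ plen μ = mullLen l p

/-- the Mullineux map. -/
def mull (l : ℕ) (p : ℕ → ℕ) : ℕ → ℕ := mullAux l (pdeg p) p

/-- the list of Mullineux components (with fuel). -/
def mullCompsAux (l : ℕ) : ℕ → (ℕ → ℕ) → List (ℕ → ℕ)
  | 0, _ => []
  | n + 1, p =>
    if p 0 = 0 then []
    else if elen l p ≤ l then [p]
    else (fun i => if i < firstSeg l p then p i else 0) ::
      mullCompsAux l n (fun j => p (j + firstSeg l p))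

/-- the Mullineux components of `λ`. -/
def mullComps (l : ℕ) (p : ℕ → ℕ) : List (ℕ → ℕ) := mullCompsAux l (plen p) p

/-- edge `l`-connectedness (with fuel): consecutive Mullineux components `α, ρ` satisfy
`α_1 - ρ_1 + ℓ(α) = l`. -/
def edgeConnAux (l : ℕ) : ℕ → (ℕ → ℕ) → Prop
  | 0, _ => True
  | n + 1, p =>
    if elen l p ≤ l then True
    else p 0 + firstSeg l p = l + p (firstSeg l p) ∧
      edgeConnAux l n fun j => p (j + firstSeg l p)

/-- `λ` is edge `l`-connected. -/
def EdgeLConnected (l : ℕ) (p : ℕ → ℕ) : Prop := edgeConnAux l (plen p) p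

/-- the node `(i+1, λ_{i+1})` (in row `i+1`, 1-indexed) is a removable node. -/
def Removable (p : ℕ → ℕ) (i : ℕ) : Prop := p (i + 1) < p i

/-- removal of the removable node in row `i+1`. -/
def removeNode (p : ℕ → ℕ) (i : ℕ) : ℕ → ℕ := fun k => if k = i then p i - 1 else p k

/-- there is an addable node `(i+1, λ_{i+1} + 1)` in row `i+1` (1-indexed). -/
def Addable (p : ℕ → ℕ) (i : ℕ) : Prop := i ≤ plen p ∧ (i = 0 ∨ p i < p (i - 1))

/-- the removable node in row `i+1` is suitable: its residue (mod `l`) differs from the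
residue of every lower addable node. -/
def Suitable (l : ℕ) (p : ℕ → ℕ) (i : ℕ) : Prop :=
  Removable p i ∧ ∀ j, i < j → Addable p j →
    ¬ ((p j : ℤ) - (j : ℤ) ≡ (p i : ℤ) - (i : ℤ) - 1 [ZMOD (l : ℤ)])

/-- the removable node in row `i+1` is co-suitable: its transpose node is a suitable
node of the transpose partition. -/
def CoSuitable (l : ℕ) (p : ℕ → ℕ) (i : ℕ) : Prop :=
  Removable p i ∧ Suitable l (conjP p) (p i - 1)

/-- `Φ_m`: partitions with at most `m` parts and `λ_1 - λ_m ≤ l - m`. -/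
def Phi (l m : ℕ) : Set (ℕ → ℕ) :=
  {p | IsPartition p ∧ plen p ≤ m ∧ p 0 - p (m - 1) ≤ l - m}

/-- `λ` is `m`-distinguished: `λ = λ⁰ + lλ̄` with
`λ⁰ = ((l-m)^k, a_1, …, a_m)`, `l - m > a_1 ≥ … ≥ a_m ≥ 0`, and `λ̄` a partition with
`λ̄_1 ≤ m - 1`. -/
def IsDistinguished (l m : ℕ) (p : ℕ → ℕ) : Prop :=
  ∃ (k : ℕ) (a : ℕ → ℕ) (pb : ℕ → ℕ),
    IsPartition pb ∧ pb 0 < m ∧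
    (∀ i j, i ≤ j → a j ≤ a i) ∧ a 0 < l - m ∧ (∀ i, m ≤ i → a i = 0) ∧
    ∀ i, p i = (if i < k then l - m else a (i - k)) + l * pb i

/-- `q` is obtained from `p` by removing a skew `l`-hook (spanning rows `a+1, …, b+1`,
1-indexed). -/
def IsHookRemoval (l : ℕ) (p q : ℕ → ℕ) : Prop :=
  IsPartition q ∧ ∃ a b : ℕ, a ≤ b ∧
    (∀ i, i < a → q i = p i) ∧
    (∀ i, a ≤ i → i < b → q i + 1 = p (i + 1)) ∧
    q b + l = p a + (b - a) ∧
    ∀ i, b < i → q i = p i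

/-- `q` is the `l`-core of `p`: obtained by repeatedly removing skew `l`-hooks until
none remain. -/
def IsCoreOf (l : ℕ) (p q : ℕ → ℕ) : Prop :=
  Relation.ReflTransGen (fun x y => IsHookRemoval l x y) p q ∧ ∀ r, ¬ IsHookRemoval l q r

/-- the `l`-core of `p`. -/
def lCore (l : ℕ) (p : ℕ → ℕ) : ℕ → ℕ := Classical.epsilon (IsCoreOf l p)


/-!
Encode a partition `P` by its beads `P j - j`. Removing the `l`-edge lets beads descend: inside each
segment every bead takes the place of the next one, so that in effect the first bead of the segment
drops by `l`. The segments of `P` and of the partition `ν` left after this removal interlace, and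
therefore the length prescribed for `Mull(P)` exceeds the one prescribed for `ν` by an amount
between `0` and `l`. Within this range a preimage of the prescribed length can be built from the
bottom upwards, and hence `ℓ(Mull(P))` is given by its recursive formula.

If `μ` is edge `l`-disconnected, consecutive first rows of its segments up to the first gap are `l`
beads apart. Among the runs of equal rows at the top of these segments take a shortest one, and the
last such. Removing the node at its end changes neither `e_l(μ)` nor `ℓ(μ)`, because the slack it
creates is passed from segment to segment and absorbed by the gap. Counting down from the bead at
position `m + 1` of the first run in steps of `l` one meets only beads of `μ` on the way to the
chosen row. Since the beads of `μ` and the reflected beads of `λ⁰` are complementary, no lower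
addable node of `λ⁰ + lλ̄` has the residue of the corresponding node.
-/

/-- The partition `(λ_{h+1}, λ_{h+2}, …)` left after deleting the first `h` rows. -/
def dropRows (p : ℕ → ℕ) (h : ℕ) : ℕ → ℕ := fun j => p (j + h)

/-! ### Partitions and their lengths -/

section Partitions

variable {p : ℕ → ℕ}

theorem dropRows_apply (p : ℕ → ℕ) (h j : ℕ) : dropRows p h j = p (j + h) := rfl

theorem dropRows_apply_zero (p : ℕ → ℕ) (h : ℕ) : dropRows p h 0 = p h := by
  rw [dropRows_apply, Nat.zero_add]

theorem dropRows_dropRows (p : ℕ → ℕ) (g h : ℕ) :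
    dropRows (dropRows p g) h = dropRows p (g + h) := by
  funext j
  simp only [dropRows_apply, Nat.add_assoc, Nat.add_comm h g]

theorem IsPartition.antitone (hp : IsPartition p) : Antitone p := fun i j => hp.1 i j

theorem isPartition_of_antitone (hanti : Antitone p) {n : ℕ} (hn : p n = 0) : IsPartition p :=
  ⟨fun _ _ hij => hanti hij, n, fun _ hi => Nat.eq_zero_of_le_zero (hn ▸ hanti hi)⟩

theorem isPartition_zero : IsPartition fun _ => 0 :=
  isPartition_of_antitone antitone_const (n := 0) rfl

theorem IsPartition.drop (hp : IsPartition p) (h : ℕ) : IsPartition (dropRows p h) := by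
  obtain ⟨N, hN⟩ := hp.2
  exact isPartition_of_antitone (fun i j hij => hp.antitone (by omega)) (hN (N + h) (by omega))

theorem plen_le_of_eq_zero {n : ℕ} (hn : p n = 0) : plen p ≤ n := Nat.sInf_le hn

theorem plen_eq_of {n : ℕ} (hn : p n = 0) (hlt : ∀ i < n, p i ≠ 0) : plen p = n :=
  le_antisymm (plen_le_of_eq_zero hn) <|
    le_csInf ⟨n, hn⟩ fun i hi => not_lt.1 fun hin => hlt i hin hi

theorem plen_zero : plen (fun _ => 0) = 0 := plen_eq_of rfl (by simp)

theorem IsPartition.plen_le_iff (hp : IsPartition p) {i : ℕ} : plen p ≤ i ↔ p i = 0 := by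
  refine ⟨fun hi => ?_, plen_le_of_eq_zero⟩
  have hlast : p (plen p) = 0 := Nat.sInf_mem (hp.2.imp fun N hN => hN N le_rfl)
  have := hp.antitone hi
  omega

theorem IsPartition.lt_plen_iff (hp : IsPartition p) {i : ℕ} : i < plen p ↔ p i ≠ 0 := by
  rw [← not_le, hp.plen_le_iff]

theorem IsPartition.plen_dropRows (hp : IsPartition p) (h : ℕ) :
    plen (dropRows p h) = plen p - h := by
  have hiff : ∀ i, plen (dropRows p h) ≤ i ↔ plen p ≤ i + h := fun i => by
    rw [(hp.drop h).plen_le_iff, hp.plen_le_iff, dropRows_apply]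
  have h1 := hiff (plen p - h)
  have h2 := hiff (plen (dropRows p h))
  omega

theorem IsPartition.pdeg_eq_sum_range (hp : IsPartition p) {n : ℕ} (hn : plen p ≤ n) :
    pdeg p = ∑ i ∈ Finset.range n, p i := by
  refine Finset.sum_subset (Finset.range_subset_range.2 hn) fun i _ hi => ?_
  rwa [Finset.mem_range, not_lt, hp.plen_le_iff] at hi

theorem IsPartition.pdeg_eq_sum_add_pdeg_dropRows (hp : IsPartition p) (h : ℕ) :
    pdeg p = ∑ i ∈ Finset.range h, p i + pdeg (dropRows p h) := by
  rw [hp.pdeg_eq_sum_range (Nat.le_add_left (plen p) h), Finset.sum_range_add,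
    (hp.drop h).pdeg_eq_sum_range (n := plen p) (by rw [hp.plen_dropRows]; omega)]
  simp only [dropRows_apply, Nat.add_comm h]

end Partitions

/-! ### The first segment -/

section FirstSegment

variable {l : ℕ} {p : ℕ → ℕ}

theorem firstSeg_mem (l : ℕ) (p : ℕ → ℕ) :
    firstSeg l p ∈ {h | 1 ≤ h ∧ l ≤ p 0 - p h + h} :=
  Nat.sInf_mem ⟨l + 1, by omega, by omega⟩

theorem firstSeg_pos (l : ℕ) (p : ℕ → ℕ) : 0 < firstSeg l p := (firstSeg_mem l p).1

theorem firstSeg_le (hl : 0 < l) (p : ℕ → ℕ) : firstSeg l p ≤ l := Nat.sInf_le ⟨hl, by omega⟩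

theorem IsPartition.add_apply_firstSeg_le (hp : IsPartition p) (l : ℕ) :
    l + p (firstSeg l p) ≤ p 0 + firstSeg l p := by
  have hspec := (firstSeg_mem l p).2
  have := hp.antitone (Nat.zero_le (firstSeg l p))
  omega

theorem IsPartition.add_lt_of_lt_firstSeg (hp : IsPartition p) {i : ℕ} (hi : 0 < i)
    (hlt : i < firstSeg l p) : p 0 + i < l + p i := by
  have hnot : i ∉ {h | 1 ≤ h ∧ l ≤ p 0 - p h + h} := Nat.notMem_of_lt_sInf hlt
  have := hp.antitone (Nat.zero_le i)
  simp only [Set.mem_ofPred_eq, not_and, not_le] at hnot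
  have := hnot hi
  omega

theorem IsPartition.firstSeg_eq (hp : IsPartition p) {h : ℕ} (hpos : 0 < h)
    (hle : l + p h ≤ p 0 + h) (hlt : ∀ i, 0 < i → i < h → p 0 + i < l + p i) :
    firstSeg l p = h := by
  refine le_antisymm (Nat.sInf_le ⟨hpos, by omega⟩) (not_lt.1 fun hc => ?_)
  have := hlt _ (firstSeg_pos l p) hc
  have := hp.add_apply_firstSeg_le l
  omega

theorem IsPartition.lt_add_plen_of_apply_firstSeg_ne_zero (hp : IsPartition p)
    (h : p (firstSeg l p) ≠ 0) : l < p 0 + plen p := by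
  have := hp.add_apply_firstSeg_le l
  have := hp.lt_plen_iff.2 h
  omega

theorem IsPartition.firstSeg_le_plen (hp : IsPartition p) (h : l < p 0 + plen p) :
    firstSeg l p ≤ plen p := by
  by_contra! hc
  have hlast := hp.plen_le_iff.1 (le_refl (plen p))
  rcases Nat.eq_zero_or_pos (plen p) with h0 | hpos
  · have := hp.plen_le_iff.1 h0.le
    omega
  · have := hp.add_lt_of_lt_firstSeg hpos hc
    omega

theorem IsPartition.lt_add_firstSeg (hp : IsPartition p) (h : l < p 0 + plen p) :
    l < p 0 + firstSeg l p := by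
  have hle := hp.add_apply_firstSeg_le l
  by_cases h0 : p (firstSeg l p) = 0
  · have := hp.plen_le_iff.2 h0
    omega
  · omega

/-- Partitions are built up segment by segment. A partition whose edge has exactly `l` nodes counts
as consisting of one full segment followed by the empty partition; this agrees with the recursions
for `removeLEdge` and `elen` and makes the base case `e(λ) < l` include the empty partition. -/
@[elab_as_elim]
theorem IsPartition.segment_induction {l : ℕ} {motive : ∀ p, IsPartition p → Prop}
    (short : ∀ p (hp : IsPartition p), p 0 + plen p ≤ l → motive p hp)
    (long : ∀ p (hp : IsPartition p), l < p 0 + plen p →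
      motive (dropRows p (firstSeg l p)) (hp.drop _) → motive p hp)
    (p : ℕ → ℕ) (hp : IsPartition p) : motive p hp := by
  induction hn : plen p using Nat.strong_induction_on generalizing p with
  | _ n ih =>
    rcases Nat.lt_or_ge l (p 0 + plen p) with h | h
    · refine long p hp h (ih _ ?_ _ _ rfl)
      have := hp.firstSeg_le_plen h
      have := firstSeg_pos l p
      rw [hp.plen_dropRows]
      omega
    · exact short p hp h

end FirstSegment

/-! ### Removal of the `l`-edge -/

section RemoveLEdge

variable {l : ℕ} {p : ℕ → ℕ}

theorem IsPartition.removeLEdgeAux_eq (hp : IsPartition p) {m n : ℕ} (hm : plen p ≤ m)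
    (hn : plen p ≤ n) : removeLEdgeAux l m p = removeLEdgeAux l n p := by
  induction m generalizing n p with
  | zero =>
    have h0 : p 0 = 0 := hp.plen_le_iff.1 hm
    cases n <;> simp only [removeLEdgeAux, h0, if_true]
  | succ m ih =>
    by_cases h0 : p 0 = 0
    · cases n <;> simp only [removeLEdgeAux, h0, if_true]
    · have := hp.lt_plen_iff.2 h0
      obtain ⟨n, rfl⟩ := Nat.exists_eq_add_one_of_ne_zero (by omega : n ≠ 0)
      have hlen := hp.plen_dropRows (firstSeg l p)
      have := firstSeg_pos l p
      have htail : removeLEdgeAux l m (fun j => p (j + firstSeg l p)) =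
          removeLEdgeAux l n (fun j => p (j + firstSeg l p)) :=
        ih (hp.drop (firstSeg l p)) (by omega) (by omega)
      simp only [removeLEdgeAux, htail]

theorem IsPartition.removeLEdge_of_edge_le (hp : IsPartition p) (h0 : p 0 ≠ 0)
    (he : p 0 + plen p - 1 ≤ l) (i : ℕ) : removeLEdge l p i = p (i + 1) - 1 := by
  obtain ⟨n, hn⟩ := Nat.exists_eq_add_one_of_ne_zero (hp.lt_plen_iff.2 h0).ne'
  rw [removeLEdge, hn, removeLEdgeAux, if_neg h0, if_pos he]

theorem IsPartition.removeLEdge_of_lt_edge (hp : IsPartition p) (he : l < p 0 + plen p - 1)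
    (i : ℕ) :
    removeLEdge l p i =
      if i + 1 < firstSeg l p then p (i + 1) - 1
      else if i + 1 = firstSeg l p then p 0 + firstSeg l p - 1 - l
      else removeLEdge l (dropRows p (firstSeg l p)) (i - firstSeg l p) := by
  have h0 : p 0 ≠ 0 := fun h0 => by have := hp.plen_le_iff.2 h0; omega
  obtain ⟨n, hn⟩ := Nat.exists_eq_add_one_of_ne_zero (hp.lt_plen_iff.2 h0).ne'
  have hlen := hp.plen_dropRows (firstSeg l p)
  have := firstSeg_pos l p
  have hfuel : removeLEdge l (dropRows p (firstSeg l p)) =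
      removeLEdgeAux l n (fun j => p (j + firstSeg l p)) :=
    (hp.drop (firstSeg l p)).removeLEdgeAux_eq le_rfl (by omega)
  rw [hfuel, removeLEdge, hn, removeLEdgeAux, if_neg h0, if_neg (by omega)]

theorem IsPartition.removeLEdge_of_short (hp : IsPartition p) (hs : p 0 + plen p ≤ l) (i : ℕ) :
    removeLEdge l p i = p (i + 1) - 1 := by
  by_cases h0 : p 0 = 0
  · have hlen : plen p = 0 := Nat.le_zero.1 (hp.plen_le_iff.2 h0)
    have := hp.antitone (Nat.zero_le (i + 1))
    simp only [removeLEdge, hlen, removeLEdgeAux]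
    omega
  · exact hp.removeLEdge_of_edge_le h0 (by omega) i

theorem IsPartition.removeLEdge_of_long (hp : IsPartition p) (hl : l < p 0 + plen p) (i : ℕ) :
    removeLEdge l p i =
      if i + 1 < firstSeg l p then p (i + 1) - 1
      else if i + 1 = firstSeg l p then p 0 + firstSeg l p - 1 - l
      else removeLEdge l (dropRows p (firstSeg l p)) (i - firstSeg l p) := by
  rcases Nat.lt_or_ge l (p 0 + plen p - 1) with he | he
  · exact hp.removeLEdge_of_lt_edge he i
  have hle := hp.firstSeg_le_plen hl
  have hlt := hp.lt_add_firstSeg hl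
  have hseg : firstSeg l p = plen p := by omega
  have hlast : p (plen p) = 0 := hp.plen_le_iff.1 le_rfl
  have h0 : p 0 ≠ 0 := fun h0 => by have := hp.plen_le_iff.2 h0; omega
  rw [hp.removeLEdge_of_edge_le h0 (by omega), hseg]
  split_ifs with h1 h2
  · rfl
  · rw [h2, hlast]
    omega
  · have htail := hp.plen_dropRows (plen p)
    have hzero : p (i + 1) = 0 := hp.plen_le_iff.1 (by omega)
    have hnext : p (i - plen p + 1 + plen p) = 0 := hp.plen_le_iff.1 (by omega)
    rw [(hp.drop (plen p)).removeLEdge_of_short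
      (by rw [dropRows_apply_zero, hlast]; omega), dropRows_apply, hzero, hnext]

theorem IsPartition.removeLEdge_of_lt_firstSeg (hp : IsPartition p) (hl : l < p 0 + plen p)
    {i : ℕ} (hi : i + 1 < firstSeg l p) : removeLEdge l p i = p (i + 1) - 1 := by
  rw [hp.removeLEdge_of_long hl, if_pos hi]

theorem IsPartition.removeLEdge_firstSeg_sub_one (hp : IsPartition p)
    (hl : l < p 0 + plen p) :
    removeLEdge l p (firstSeg l p - 1) + l + 1 = p 0 + firstSeg l p := by
  have := firstSeg_pos l p
  have := hp.lt_add_firstSeg hl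
  rw [hp.removeLEdge_of_long hl, if_neg (by omega), if_pos (by omega)]
  omega

theorem IsPartition.removeLEdge_dropRows_firstSeg (hp : IsPartition p)
    (hl : l < p 0 + plen p) :
    removeLEdge l (dropRows p (firstSeg l p)) = dropRows (removeLEdge l p) (firstSeg l p) := by
  funext j
  rw [dropRows_apply, hp.removeLEdge_of_long hl, if_neg (by omega), if_neg (by omega),
    Nat.add_sub_cancel]

/-- In terms of the beads `λ_j - j`: each bead moves strictly down without passing its successor,
and it lands either on its successor, or at the bottom, or `l` below a bead at or above it. -/
theorem IsPartition.removeLEdge_bounds (hl : 0 < l) (hp : IsPartition p) (j : ℕ) :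
    removeLEdge l p j ≤ p j - 1 ∧ p (j + 1) ≤ removeLEdge l p j + 1 ∧
      (removeLEdge l p j + 1 = p (j + 1) ∨ removeLEdge l p j = 0 ∨
        ∃ s ≤ j, removeLEdge l p j + l + s = p s + j) := by
  induction p, hp using IsPartition.segment_induction (l := l) generalizing j with
  | short p hp hs =>
    have := hp.antitone (by omega : j ≤ j + 1)
    rw [hp.removeLEdge_of_short hs]
    omega
  | long p hp hlong ih =>
    have := firstSeg_pos l p
    have := hp.lt_add_firstSeg hlong
    rcases Nat.lt_trichotomy (j + 1) (firstSeg l p) with hj | hj | hj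
    · have := hp.antitone (by omega : j ≤ j + 1)
      rw [hp.removeLEdge_of_lt_firstSeg hlong hj]
      omega
    · have hend := hp.removeLEdge_firstSeg_sub_one hlong
      rw [← hj, Nat.add_sub_cancel] at hend
      have hseg := hp.add_apply_firstSeg_le l
      have := hp.antitone (Nat.zero_le j)
      have hmin : j = 0 ∨ p 0 + j < l + p j := j.eq_zero_or_pos.imp_right fun h =>
        hp.add_lt_of_lt_firstSeg h (by omega)
      rw [← hj] at hseg
      refine ⟨?_, by omega, Or.inr (Or.inr ⟨0, j.zero_le, by omega⟩)⟩
      rcases hmin with rfl | hmin <;> omega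
    · obtain ⟨k, rfl⟩ := Nat.exists_eq_add_of_le' (Nat.le_of_lt_succ hj)
      have htail := ih k
      rw [hp.removeLEdge_dropRows_firstSeg hlong] at htail
      simp only [dropRows_apply, Nat.add_right_comm k 1] at htail
      refine ⟨htail.1, htail.2.1, htail.2.2.imp_right (Or.imp_right ?_)⟩
      rintro ⟨s, hs, h⟩
      exact ⟨s + firstSeg l p, by omega, by omega⟩

theorem IsPartition.removeLEdge_le_sub_one (hl : 0 < l) (hp : IsPartition p) (j : ℕ) :
    removeLEdge l p j ≤ p j - 1 := (hp.removeLEdge_bounds hl j).1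

theorem IsPartition.apply_succ_le_removeLEdge (hl : 0 < l) (hp : IsPartition p) (j : ℕ) :
    p (j + 1) ≤ removeLEdge l p j + 1 := (hp.removeLEdge_bounds hl j).2.1

theorem IsPartition.isPartition_removeLEdge (hl : 0 < l) (hp : IsPartition p) :
    IsPartition (removeLEdge l p) := by
  refine isPartition_of_antitone (antitone_nat_of_succ_le fun n => ?_) (n := plen p) ?_
  · have := hp.removeLEdge_le_sub_one hl (n + 1)
    have := hp.apply_succ_le_removeLEdge hl n
    omega
  · have := hp.removeLEdge_le_sub_one hl (plen p)
    have := hp.plen_le_iff.1 (le_refl (plen p))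
    omega

theorem IsPartition.plen_removeLEdge_le (hl : 0 < l) (hp : IsPartition p) :
    plen (removeLEdge l p) ≤ plen p := by
  have := hp.removeLEdge_le_sub_one hl (plen p)
  have := hp.plen_le_iff.1 (le_refl (plen p))
  exact plen_le_of_eq_zero (by omega)

theorem IsPartition.pdeg_removeLEdge_le (hl : 0 < l) (hp : IsPartition p) :
    pdeg (removeLEdge l p) ≤ pdeg p := by
  rw [(hp.isPartition_removeLEdge hl).pdeg_eq_sum_range (hp.plen_removeLEdge_le hl), pdeg]
  exact Finset.sum_le_sum fun i _ => (hp.removeLEdge_le_sub_one hl i).trans (Nat.sub_le _ _)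

theorem IsPartition.isLRegular_removeLEdge (hl : 2 ≤ l) (hp : IsPartition p) (hr : IsLRegular l p) :
    IsLRegular l (removeLEdge l p) := by
  have hl0 : 0 < l := by omega
  have hν := (hp.isPartition_removeLEdge hl0).antitone
  intro i hi heq
  obtain ⟨v, hv⟩ : ∃ v, v = removeLEdge l p i := ⟨_, rfl⟩
  have hconst : ∀ j, i ≤ j → j ≤ i + l - 1 → removeLEdge l p j = v := fun j h1 h2 => by
    have := hν h1
    have := hν h2
    omega
  have hparts : ∀ j, i + 1 ≤ j → j ≤ i + l - 1 → p j = v + 1 := fun j h1 h2 => by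
    have hle := hp.removeLEdge_le_sub_one hl0 j
    have hge := hp.apply_succ_le_removeLEdge hl0 (j - 1)
    rw [hconst j (by omega) h2] at hle
    rw [hconst (j - 1) (by omega) (by omega), Nat.sub_add_cancel (by omega)] at hge
    omega
  have hlast := hparts (i + l - 1) (by omega) le_rfl
  have habove : v + 2 ≤ p i := by
    have hne := hr i
    have := hp.antitone (by omega : i ≤ i + l - 1)
    omega
  have hbelow : p (i + l) ≠ v + 1 := by
    have hne := hr (i + 1)
    rw [hparts (i + 1) le_rfl (by omega), show i + 1 + l - 1 = i + l by omega] at hne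
    exact hne (by omega)
  obtain ⟨-, -, hcase⟩ := hp.removeLEdge_bounds hl0 (i + l - 1)
  rw [hconst (i + l - 1) (by omega) le_rfl, Nat.sub_add_cancel (by omega)] at hcase
  rcases hcase with h | h | ⟨s, hs, h⟩
  · exact hbelow h.symm
  · omega
  · rcases Nat.lt_or_ge i s with his | his
    · have := hparts s his hs
      omega
    · have := hp.antitone his
      omega

end RemoveLEdge

/-! ### The size of the `l`-edge and the length of the Mullineux image -/

section MullineuxLength

variable {l : ℕ} {p : ℕ → ℕ}

theorem sum_range_add_of_succ_eq {ν : ℕ → ℕ} {k : ℕ} (h : ∀ i < k, ν i + 1 = p (i + 1)) :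
    ∑ i ∈ Finset.range k, ν i + k + p 0 = ∑ i ∈ Finset.range (k + 1), p i := by
  rw [Finset.sum_range_succ', ← Finset.sum_congr rfl fun i hi => h i (Finset.mem_range.1 hi),
    Finset.sum_add_distrib, Finset.sum_const, Finset.card_range, smul_eq_mul, mul_one]

theorem IsPartition.elen_of_short (hp : IsPartition p) (hs : p 0 + plen p ≤ l) :
    elen l p = p 0 + plen p - 1 := by
  rcases hn : plen p with _ | n
  · have := hp.plen_le_iff.1 hn.le
    simp [elen, pdeg, hn, this]
  have hl : 0 < l := by omega
  have hν := hp.removeLEdge_of_short hs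
  have hlast : removeLEdge l p n = 0 := by
    rw [hν, hp.plen_le_iff.1 hn.le]
  have htele : ∀ i < n, removeLEdge l p i + 1 = p (i + 1) := fun i hi => by
    have := hp.lt_plen_iff.1 (by omega : i + 1 < plen p)
    rw [hν]
    omega
  have hsum := sum_range_add_of_succ_eq htele
  rw [elen, (hp.isPartition_removeLEdge hl).pdeg_eq_sum_range (plen_le_of_eq_zero hlast), pdeg, hn]
  omega

theorem IsPartition.elen_of_long (hl : 0 < l) (hp : IsPartition p) (hlong : l < p 0 + plen p) :
    elen l p = l + elen l (dropRows p (firstSeg l p)) := by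
  have hν := hp.isPartition_removeLEdge hl
  have htail := (hp.drop (firstSeg l p)).pdeg_removeLEdge_le hl
  have hend := hp.removeLEdge_firstSeg_sub_one hlong
  have hle := hp.firstSeg_le_plen hlong
  rw [elen, elen, hp.pdeg_eq_sum_add_pdeg_dropRows (firstSeg l p),
    hν.pdeg_eq_sum_add_pdeg_dropRows (firstSeg l p), ← hp.removeLEdge_dropRows_firstSeg hlong]
  obtain ⟨k, hk⟩ := Nat.exists_eq_add_one_of_ne_zero (firstSeg_pos l p).ne'
  have htele : ∀ i < k, removeLEdge l p i + 1 = p (i + 1) := fun i hi => by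
    have := hp.lt_plen_iff.1 (by omega : i + 1 < plen p)
    rw [hp.removeLEdge_of_lt_firstSeg hlong (by omega)]
    omega
  have hsum := sum_range_add_of_succ_eq htele
  rw [hk, Nat.add_sub_cancel] at hend
  rw [← hk] at hsum
  have hsplit : ∑ i ∈ Finset.range (firstSeg l p), removeLEdge l p i =
      ∑ i ∈ Finset.range k, removeLEdge l p i + removeLEdge l p k := by
    rw [hk, Finset.sum_range_succ]
  omega

theorem IsPartition.plen_le_elen (hl : 0 < l) (hp : IsPartition p) : plen p ≤ elen l p := by
  induction p, hp using IsPartition.segment_induction (l := l) with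
  | short p hp hs =>
    have := hp.lt_plen_iff (i := 0)
    rw [hp.elen_of_short hs]
    omega
  | long p hp hlong ih =>
    have := firstSeg_le hl p
    rw [hp.plen_dropRows] at ih
    rw [hp.elen_of_long hl hlong]
    omega

theorem IsPartition.pdeg_removeLEdge_lt (hl : 0 < l) (hp : IsPartition p) (h0 : p 0 ≠ 0) :
    pdeg (removeLEdge l p) < pdeg p := by
  have hlen := hp.plen_le_elen hl
  have := hp.lt_plen_iff.2 h0
  rw [elen] at hlen
  omega

theorem IsPartition.mullLen_of_short (hp : IsPartition p) (hs : p 0 + plen p ≤ l) :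
    mullLen l p = p 0 := by
  have hzero := hp.plen_le_iff (i := 0)
  rw [mullLen, hp.elen_of_short hs]
  split_ifs with hdvd
  · have := Nat.eq_zero_of_dvd_of_lt hdvd
    omega
  · have : p 0 + plen p - 1 ≠ 0 := fun h => hdvd (by rw [h]; exact dvd_zero l)
    omega

theorem IsPartition.mullLen_of_long (hl : 0 < l) (hp : IsPartition p)
    (hlong : l < p 0 + plen p) :
    mullLen l p + firstSeg l p = l + mullLen l (dropRows p (firstSeg l p)) := by
  have := firstSeg_le hl p
  have := hp.firstSeg_le_plen hlong
  have htail := (hp.drop (firstSeg l p)).plen_le_elen hl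
  rw [hp.plen_dropRows] at htail
  simp only [mullLen, hp.elen_of_long hl hlong, Nat.dvd_add_self_left, hp.plen_dropRows]
  split_ifs <;> omega

theorem IsPartition.mullLen_le (hl : 0 < l) (hp : IsPartition p) : mullLen l p ≤ p 0 := by
  induction p, hp using IsPartition.segment_induction (l := l) with
  | short p hp hs => exact (hp.mullLen_of_short hs).le
  | long p hp hlong ih =>
    have := hp.mullLen_of_long hl hlong
    have := hp.add_apply_firstSeg_le l
    rw [dropRows_apply_zero] at ih
    omega

theorem IsPartition.mullLen_eq_zero (hl : 0 < l) (hp : IsPartition p) (h0 : p 0 = 0) :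
    mullLen l p = 0 := Nat.eq_zero_of_le_zero (h0 ▸ hp.mullLen_le hl)

theorem IsPartition.apply_zero_ne_zero_of_long (hp : IsPartition p) (hlong : l < p 0 + plen p) :
    p 0 ≠ 0 := fun h => by
  have := hp.plen_le_iff.2 h
  omega

theorem IsPartition.dropRows_removeLEdge_short (hl : 0 < l) (hp : IsPartition p)
    (hs : p 0 + plen p ≤ l) (u : ℕ) :
    dropRows (removeLEdge l p) u 0 + plen (dropRows (removeLEdge l p) u) ≤ l := by
  have := hp.removeLEdge_le_sub_one hl u
  have := hp.antitone (Nat.zero_le u)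
  have := hp.plen_removeLEdge_le hl
  rw [(hp.isPartition_removeLEdge hl).plen_dropRows, dropRows_apply_zero]
  omega

theorem IsPartition.firstSeg_add_removeLEdge_le (hl : 0 < l) (hp : IsPartition p)
    (hlong : l < p 0 + plen p) {u : ℕ}
    (hs : dropRows (removeLEdge l p) u 0 + plen (dropRows (removeLEdge l p) u) ≤ l) :
    firstSeg l p + removeLEdge l p u ≤ l + u := by
  have hν := hp.isPartition_removeLEdge hl
  rw [dropRows_apply_zero, hν.plen_dropRows] at hs
  by_contra! hc
  have hle := firstSeg_le hl p
  have hu : u < plen (removeLEdge l p) := hν.lt_plen_iff.2 (by omega)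
  have hzero : removeLEdge l p (firstSeg l p - 1) = 0 := hν.plen_le_iff.1 (by omega)
  have := hp.removeLEdge_firstSeg_sub_one hlong
  have := hp.removeLEdge_le_sub_one hl u
  have := hp.antitone (Nat.zero_le u)
  omega

theorem IsPartition.firstSeg_le_add_firstSeg_removeLEdge (hl : 0 < l) (hp : IsPartition p)
    (hlong : l < p 0 + plen p) (u : ℕ) :
    firstSeg l p ≤ u + firstSeg l (dropRows (removeLEdge l p) u) := by
  have hν := hp.isPartition_removeLEdge hl
  by_contra! hc
  have := firstSeg_pos l (dropRows (removeLEdge l p) u)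
  have hseg := (hν.drop u).add_apply_firstSeg_le l
  rw [dropRows_apply_zero, dropRows_apply, Nat.add_comm _ u] at hseg
  obtain ⟨i, hi⟩ : ∃ i, i = u + firstSeg l (dropRows (removeLEdge l p) u) := ⟨_, rfl⟩
  rw [← hi] at hc hseg
  have := hp.apply_zero_ne_zero_of_long hlong
  have := hp.removeLEdge_le_sub_one hl u
  have := hp.antitone (Nat.zero_le u)
  rcases Nat.lt_or_ge (i + 1) (firstSeg l p) with hlt | hge
  · have := hp.add_lt_of_lt_firstSeg (by omega) hlt
    have := hp.apply_succ_le_removeLEdge hl i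
    omega
  · have hend := hp.removeLEdge_firstSeg_sub_one hlong
    rw [show firstSeg l p - 1 = i by omega] at hend
    omega

/-- The segments of the `l`-edges of `p` and of the rows of `ν` below row `u` interlace: the
condition `p 0 + u ≤ ν u + l` on their first rows is inherited by the remainders. -/
theorem IsPartition.apply_firstSeg_add_le_removeLEdge_add (hl : 0 < l) (hp : IsPartition p) {u : ℕ}
    (hlong' : l < dropRows (removeLEdge l p) u 0 + plen (dropRows (removeLEdge l p) u))
    (hlong : l < p 0 + plen p) (hu : p 0 + u ≤ removeLEdge l p u + l) :
    p (firstSeg l p) + (u + firstSeg l (dropRows (removeLEdge l p) u) - firstSeg l p) ≤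
      removeLEdge l p (u + firstSeg l (dropRows (removeLEdge l p) u)) + l := by
  have hν := hp.isPartition_removeLEdge hl
  have htail := hp.drop (firstSeg l p)
  have hg := (hν.drop u).firstSeg_le_plen hlong'
  have hgpos := firstSeg_pos l (dropRows (removeLEdge l p) u)
  have hgmin := fun i => (hν.drop u).add_lt_of_lt_firstSeg (l := l) (i := i)
  simp only [hν.plen_dropRows, dropRows_apply, Nat.zero_add] at hg hgmin
  obtain ⟨g, hgdef⟩ : ∃ g, g = firstSeg l (dropRows (removeLEdge l p) u) := ⟨_, rfl⟩
  rw [← hgdef] at hg hgpos hgmin ⊢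
  rcases Nat.lt_or_ge l (dropRows p (firstSeg l p) 0 + plen (dropRows p (firstSeg l p)))
    with ht | ht
  · have hend := htail.removeLEdge_firstSeg_sub_one ht
    have := firstSeg_pos l (dropRows p (firstSeg l p))
    have := firstSeg_pos l p
    have := hp.add_apply_firstSeg_le l
    have := hp.antitone (Nat.zero_le (firstSeg l p))
    rw [hp.removeLEdge_dropRows_firstSeg hlong, dropRows_apply_zero, dropRows_apply] at hend
    obtain ⟨c, hc⟩ : ∃ c, c = firstSeg l (dropRows p (firstSeg l p)) - 1 + firstSeg l p := ⟨_, rfl⟩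
    rw [← hc] at hend
    rcases Nat.lt_or_ge c (u + g) with hcg | hcg
    · rcases Nat.lt_or_ge u c with huc | huc
      · have hmin := hgmin (c - u) (by omega) (by omega)
        rw [Nat.sub_add_cancel huc.le] at hmin
        omega
      · have := hν.antitone huc
        omega
    · have := hν.antitone hcg
      omega
  · rw [hp.plen_dropRows, dropRows_apply_zero] at ht
    have := hp.plen_removeLEdge_le hl
    have := hp.firstSeg_le_plen hlong
    omega

theorem IsPartition.mullLen_interlace (hl : 0 < l) (hp : IsPartition p) {u : ℕ}
    (hu : p 0 + u ≤ removeLEdge l p u + l) :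
    mullLen l (dropRows (removeLEdge l p) u) ≤ mullLen l p + u ∧
      mullLen l p + u ≤ mullLen l (dropRows (removeLEdge l p) u) + l := by
  induction p, hp using IsPartition.segment_induction (l := l) generalizing u with
  | short p hp hs =>
    have := hp.removeLEdge_le_sub_one hl u
    have := hp.antitone (Nat.zero_le u)
    rw [hp.mullLen_of_short hs, ((hp.isPartition_removeLEdge hl).drop u).mullLen_of_short
      (hp.dropRows_removeLEdge_short hl hs u), dropRows_apply_zero]
    omega
  | long p hp hlong ih =>
    have hν := hp.isPartition_removeLEdge hl
    have hrec := hp.mullLen_of_long hl hlong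
    rcases Nat.lt_or_ge l (dropRows (removeLEdge l p) u 0 + plen (dropRows (removeLEdge l p) u))
      with hlong' | hs
    · have hle := hp.firstSeg_le_add_firstSeg_removeLEdge hl hlong u
      have hkey := hp.apply_firstSeg_add_le_removeLEdge_add hl hlong' hlong hu
      have hrec' := (hν.drop u).mullLen_of_long hl hlong'
      rw [dropRows_dropRows] at hrec'
      obtain ⟨u', hu'⟩ := Nat.exists_eq_add_of_le hle
      rw [hu', Nat.add_sub_cancel_left] at hkey
      have htail := ih (u := u')
      rw [hp.removeLEdge_dropRows_firstSeg hlong, dropRows_dropRows, ← hu', dropRows_apply_zero,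
        dropRows_apply, Nat.add_comm u', ← hu'] at htail
      rw [← hu'] at hkey
      have := htail hkey
      omega
    · have := hp.firstSeg_add_removeLEdge_le hl hlong hs
      have := hp.mullLen_le hl
      rw [(hν.drop u).mullLen_of_short hs, dropRows_apply_zero]
      omega

theorem IsPartition.mullLen_removeLEdge (hl : 0 < l) (hp : IsPartition p) :
    mullLen l (removeLEdge l p) ≤ mullLen l p ∧
      mullLen l p ≤ mullLen l (removeLEdge l p) + l := by
  refine hp.mullLen_interlace hl (u := 0) ?_
  rcases Nat.lt_or_ge l (p 0 + plen p) with hlong | hs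
  · have hend := hp.removeLEdge_firstSeg_sub_one hlong
    rcases Nat.lt_or_ge 1 (firstSeg l p) with h1 | h1
    · have := hp.add_lt_of_lt_firstSeg Nat.one_pos h1
      have : p 1 ≤ removeLEdge l p 0 + 1 := hp.apply_succ_le_removeLEdge hl 0
      omega
    · have := firstSeg_pos l p
      rw [Nat.sub_eq_zero_of_le h1] at hend
      omega
  · omega

end MullineuxLength

/-! ### Partitions with prescribed length and `l`-edge removal -/

section Prepend

variable {l m : ℕ} {N q : ℕ → ℕ}

/-- The partition whose first segment has `m` rows, on top of the rows `q`, and whose `l`-edge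
removal starts with the rows `N 0, …, N (m - 1)`. The value in row `0` does not truncate in the
situations considered below. -/
def prependSegment (l : ℕ) (N : ℕ → ℕ) (m : ℕ) (q : ℕ → ℕ) : ℕ → ℕ := fun i =>
  if i = 0 then N (m - 1) + l + 1 - m else if i < m then N (i - 1) + 1 else q (i - m)

theorem prependSegment_zero_add (htop : N 0 + m ≤ N (m - 1) + l) :
    prependSegment l N m q 0 + m = N (m - 1) + l + 1 := by
  rw [prependSegment, if_pos rfl]
  omega

theorem prependSegment_succ_of_lt {i : ℕ} (hi : i + 1 < m) :
    prependSegment l N m q (i + 1) = N i + 1 := by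
  rw [prependSegment, if_neg (by omega), if_pos hi, Nat.add_sub_cancel]

theorem prependSegment_add (hm : 0 < m) (i : ℕ) : prependSegment l N m q (i + m) = q i := by
  rw [prependSegment, if_neg (by omega), if_neg (by omega), Nat.add_sub_cancel]

theorem dropRows_prependSegment (hm : 0 < m) : dropRows (prependSegment l N m q) m = q :=
  funext (prependSegment_add hm)

theorem prependSegment_succ_le (hl : 0 < l) (hm : 0 < m) (hq : IsPartition q)
    (hrem : removeLEdge l q = dropRows N m) (hq0 : q 0 ≤ N (m - 1) + 1) (i : ℕ) :
    prependSegment l N m q (i + 1) ≤ N i + 1 := by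
  rcases Nat.lt_trichotomy (i + 1) m with hi | rfl | hi
  · exact (prependSegment_succ_of_lt hi).le
  · simpa only [Nat.zero_add, Nat.add_sub_cancel] using
      (prependSegment_add (l := l) (N := N) (q := q) hm 0).trans_le hq0
  · obtain ⟨j, rfl⟩ := Nat.exists_eq_add_of_le' (Nat.le_of_lt_succ hi)
    have := hq.apply_succ_le_removeLEdge hl j
    rwa [hrem, dropRows_apply, ← prependSegment_add (q := q) hm (j + 1), Nat.add_right_comm] at this

theorem isPartition_prependSegment (hl : 0 < l) (hm : 0 < m) (hN : IsPartition N)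
    (hq : IsPartition q) (hrem : removeLEdge l q = dropRows N m)
    (htop : N 0 + m ≤ N (m - 1) + l) (hq0 : q 0 ≤ N (m - 1) + 1) :
    IsPartition (prependSegment l N m q) := by
  have hsucc := prependSegment_succ_le hl hm hq hrem hq0
  refine isPartition_of_antitone (antitone_nat_of_succ_le fun n => ?_) (n := plen q + m) ?_
  · have hn := hsucc n
    rcases Nat.lt_or_ge n m with hnm | hnm
    · rcases n with _ | n
      · have := prependSegment_zero_add (q := q) htop
        omega
      · have := hN.antitone (by omega : n ≤ n + 1)
        rw [prependSegment_succ_of_lt hnm]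
        omega
    · obtain ⟨j, rfl⟩ := Nat.exists_eq_add_of_le' hnm
      rw [Nat.add_right_comm, prependSegment_add hm, prependSegment_add hm]
      exact hq.antitone (Nat.le_succ j)
  · rw [prependSegment_add hm]
    exact hq.plen_le_iff.1 le_rfl

theorem plen_prependSegment (hm : 0 < m) (hQ : IsPartition (prependSegment l N m q))
    (htop : N 0 + m ≤ N (m - 1) + l) : plen (prependSegment l N m q) = plen q + m := by
  have hlast : m - 1 < plen (prependSegment l N m q) := hQ.lt_plen_iff.2 <| by
    rcases hi : m - 1 with _ | i
    · have := prependSegment_zero_add (q := q) htop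
      omega
    · rw [prependSegment_succ_of_lt (by omega)]
      exact Nat.succ_ne_zero _
  have hlen := hQ.plen_dropRows m
  rw [dropRows_prependSegment hm] at hlen
  omega

theorem firstSeg_prependSegment (hm : 0 < m) (hN : IsPartition N)
    (hQ : IsPartition (prependSegment l N m q)) (htop : N 0 + m ≤ N (m - 1) + l)
    (hq0 : q 0 ≤ N (m - 1) + 1) : firstSeg l (prependSegment l N m q) = m := by
  have hzero := prependSegment_zero_add (q := q) htop
  refine hQ.firstSeg_eq hm ?_ fun i hi him => ?_
  · have := prependSegment_add (l := l) (N := N) (q := q) hm 0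
    rw [Nat.zero_add] at this
    omega
  · obtain ⟨j, rfl⟩ := Nat.exists_eq_add_one_of_ne_zero hi.ne'
    have := hN.antitone (by omega : j ≤ m - 1)
    rw [prependSegment_succ_of_lt him]
    omega

theorem removeLEdge_prependSegment (hm : 0 < m) (hN : IsPartition N)
    (hQ : IsPartition (prependSegment l N m q)) (hrem : removeLEdge l q = dropRows N m)
    (htop : N 0 + m ≤ N (m - 1) + l) (hq0 : q 0 ≤ N (m - 1) + 1) :
    removeLEdge l (prependSegment l N m q) = N := by
  have hzero := prependSegment_zero_add (q := q) htop
  have hlen := plen_prependSegment hm hQ htop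
  funext i
  rw [hQ.removeLEdge_of_long (by omega), firstSeg_prependSegment hm hN hQ htop hq0,
    dropRows_prependSegment hm, hrem]
  split_ifs with h1 h2
  · rw [prependSegment_succ_of_lt h1, Nat.add_sub_cancel]
  · obtain rfl : i = m - 1 := by omega
    omega
  · rw [dropRows_apply, Nat.sub_add_cancel (by omega)]

theorem isLRegular_prependSegment (hl : 2 ≤ l) (hm : 0 < m) (hN : IsPartition N)
    (hq : IsPartition q) (hrem : removeLEdge l q = dropRows N m)
    (htop : N 0 + m ≤ N (m - 1) + l) (hq0 : q 0 ≤ N (m - 1) + 1) (hNr : IsLRegular l N)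
    (hqr : IsLRegular l q) (hlen : plen q + m ≤ plen N + l) (hne : q 0 = 0 → N (m - 1) ≠ 0) :
    IsLRegular l (prependSegment l N m q) := by
  have hQ := isPartition_prependSegment (by omega) hm hN hq hrem htop hq0
  have hzero := prependSegment_zero_add (q := q) htop
  have hsucc := prependSegment_succ_le (by omega) hm hq hrem hq0
  have hplen := plen_prependSegment hm hQ htop
  intro i hi heq
  have hlt := hQ.lt_plen_iff.2 (heq.trans_ne hi)
  rcases Nat.lt_or_ge i m with him | him
  · rcases i with _ | i
    · have h1 := hsucc (l - 2)
      rw [show l - 2 + 1 = 0 + l - 1 by omega, heq] at h1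
      have := hN.antitone (Nat.zero_le (l - 2))
      rcases Nat.lt_or_ge (l - 1) m with hlm | hlm
      · obtain rfl : m = l := by
          have := hN.antitone (by omega : l - 2 ≤ m - 1)
          have := hN.antitone (Nat.zero_le (m - 1))
          omega
        have hN0 : N 0 = 0 := by_contra fun h => hNr 0 h (by rw [Nat.zero_add]; omega)
        have := hN.plen_le_iff.2 hN0
        exact hne (hq.plen_le_iff.1 (by omega)) (by omega)
      · obtain ⟨j, hj⟩ := Nat.exists_eq_add_of_le' hlm
        have := hq.antitone (Nat.zero_le j)
        have := hN.antitone (Nat.zero_le (m - 1))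
        rw [Nat.zero_add, hj, prependSegment_add hm] at heq
        omega
    · have h1 := hsucc (i + (l - 1))
      rw [prependSegment_succ_of_lt him] at heq
      rw [show i + (l - 1) + 1 = i + 1 + l - 1 by omega, heq] at h1
      have h2 := hN.antitone (by omega : i ≤ i + (l - 1))
      have h3 : N i = 0 := by_contra fun h => hNr i h (by
        rw [Nat.add_sub_assoc (by omega)]; omega)
      have := hN.plen_le_iff.2 h3
      omega
  · obtain ⟨j, rfl⟩ := Nat.exists_eq_add_of_le' him
    rw [show j + m + l - 1 = j + l - 1 + m by omega, prependSegment_add hm,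
      prependSegment_add hm] at heq
    rw [prependSegment_add hm] at hi
    exact hqr j hi heq

theorem isLRegular_zero (l : ℕ) : IsLRegular l fun _ => 0 := fun _ h => absurd rfl h

theorem IsLRegular.drop (hl : 0 < l) (hN : IsLRegular l N) (h : ℕ) :
    IsLRegular l (dropRows N h) := fun i hi => by
  rw [dropRows_apply, show i + l - 1 + h = i + h + l - 1 by omega]
  exact hN (i + h) hi

/-- An intermediate stage in the construction of a partition of length `r` whose `l`-edge removal is
`N`: the partition `q` is a candidate for its rows from row `k` on. The last two conditions allow
the rows above to be prepended. -/
structure IsPreimageTail (l : ℕ) (N : ℕ → ℕ) (r k : ℕ) (q : ℕ → ℕ) : Prop where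
  isPartition : IsPartition q
  isLRegular : IsLRegular l q
  removeLEdge_eq : removeLEdge l q = dropRows N k
  plen_add : plen q + k = r
  apply_zero_le : 0 < k → q 0 ≤ N (k - 1) + 1
  apply_ne_zero : 0 < k → q 0 = 0 → N (k - 1) ≠ 0

theorem exists_isPreimageTail (hN : IsPartition N) {r : ℕ} (hr : plen N ≤ r) (hl : 2 ≤ l) :
    ∃ k q, IsPreimageTail l N r k q := by
  have hdrop : ∀ k, plen N ≤ k → dropRows N k = fun _ => 0 := fun k hk =>
    funext fun _ => hN.plen_le_iff.1 (by omega)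
  rcases Nat.eq_or_lt_of_le hr with rfl | hlt
  · refine ⟨plen N, fun _ => 0, isPartition_zero, isLRegular_zero l, ?_, ?_, ?_, ?_⟩
    · rw [hdrop _ le_rfl]
      funext i
      rw [isPartition_zero.removeLEdge_of_short (by rw [plen_zero]; omega)]
    · rw [plen_zero, Nat.zero_add]
    · exact fun _ => Nat.zero_le _
    · exact fun hpos _ => hN.lt_plen_iff.1 (by omega)
  · let q : ℕ → ℕ := fun i => if i = 0 then 1 else 0
    have hq_succ : ∀ i, q (i + 1) = 0 := fun i => if_neg i.succ_ne_zero
    have hq : IsPartition q := isPartition_of_antitone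
      (antitone_nat_of_succ_le fun n => (hq_succ n).trans_le (Nat.zero_le _)) (hq_succ 0)
    have hlen : plen q = 1 := plen_eq_of (hq_succ 0) fun _ hi => by simp [q, Nat.lt_one_iff.1 hi]
    refine ⟨r - 1, q, hq, fun i hi => ?_, ?_, by omega, fun _ => ?_, fun _ h => ?_⟩
    · rw [show i + l - 1 = i + (l - 2) + 1 by omega, hq_succ]
      exact hi.symm
    · rw [hdrop _ (by omega)]
      funext i
      rw [hq.removeLEdge_of_short (by rw [hlen]; exact hl), hq_succ]
    · exact Nat.le_add_left 1 _
    · exact absurd h one_ne_zero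

theorem IsPartition.exists_segment_start (hl : 0 < l) (hN : IsPartition N) {k : ℕ} (hk : 0 < k)
    (hkl : k ≤ plen N + l) :
    ∃ s < k, s ≤ plen N ∧ N s + (k - 1) < N (k - 1) + l + s ∧
      (0 < s → N (k - 1) + l + (s - 1) ≤ N (s - 1) + (k - 1)) := by
  classical
  have hex : ∃ s, N s + (k - 1) < N (k - 1) + l + s := ⟨k - 1, by omega⟩
  have hmin : ∀ i < Nat.find hex, N (k - 1) + l + i ≤ N i + (k - 1) := fun i hi =>
    not_lt.1 (Nat.find_min hex hi)
  have hsk : Nat.find hex < k := (Nat.find_le (by omega)).trans_lt (Nat.sub_lt hk one_pos)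
  refine ⟨Nat.find hex, hsk, ?_, Nat.find_spec hex, fun hs => hmin _ (by omega)⟩
  by_contra! hc
  have := hmin (Nat.find hex - 1) (by omega)
  have h1 : N (Nat.find hex - 1) = 0 := hN.plen_le_iff.1 (by omega)
  have h2 : N (k - 1) = 0 := hN.plen_le_iff.1 (by omega)
  omega

theorem IsPreimageTail.exists_lt (hl : 2 ≤ l) (hN : IsPartition N) (hNr : IsLRegular l N)
    {r k : ℕ} (hr : r ≤ plen N + l) (hk : 0 < k) (h : IsPreimageTail l N r k q) :
    ∃ s < k, ∃ Q, IsPreimageTail l N r s Q := by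
  have hkr := h.plen_add
  obtain ⟨s, hsk, hslen, hs, hmin⟩ :=
    hN.exists_segment_start (l := l) (by omega) hk (by omega)
  obtain ⟨m, rfl⟩ := Nat.exists_eq_add_of_lt hsk
  have hrem : removeLEdge l q = dropRows (dropRows N s) (m + 1) := by
    rw [h.removeLEdge_eq, dropRows_dropRows, Nat.add_assoc]
  have hrow : dropRows N s (m + 1 - 1) = N (s + m + 1 - 1) := by
    rw [dropRows_apply, Nat.add_sub_cancel, Nat.add_sub_cancel, Nat.add_comm]
  have htop : dropRows N s 0 + (m + 1) ≤ dropRows N s (m + 1 - 1) + l := by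
    rw [dropRows_apply_zero, hrow]
    omega
  have hq0 : q 0 ≤ dropRows N s (m + 1 - 1) + 1 := hrow ▸ h.apply_zero_le hk
  have hplen : plen q + (m + 1) ≤ plen (dropRows N s) + l := by
    rw [hN.plen_dropRows]
    omega
  have hQ := isPartition_prependSegment (by omega) m.succ_pos (hN.drop s) h.isPartition hrem
    htop hq0
  have hQ0 := prependSegment_zero_add (q := q) htop
  rw [hrow] at hQ0
  refine ⟨s, hsk, prependSegment l (dropRows N s) (m + 1) q, hQ,
    isLRegular_prependSegment hl m.succ_pos (hN.drop s) h.isPartition hrem htop hq0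
      (hNr.drop (by omega) s) h.isLRegular hplen (hrow ▸ h.apply_ne_zero hk),
    removeLEdge_prependSegment m.succ_pos (hN.drop s) hQ hrem htop hq0, ?_, fun hs0 => ?_, ?_⟩
  · rw [plen_prependSegment m.succ_pos hQ htop, ← h.plen_add]
    omega
  · have := hmin hs0
    omega
  · intro _ h0
    rw [dropRows_apply_zero, hrow] at htop
    omega

/-- The rows are built from the bottom upwards, segment by segment, each segment being as long as
possible. -/
theorem IsPartition.exists_removeLEdge_eq (hl : 2 ≤ l) (hN : IsPartition N)
    (hNr : IsLRegular l N) {r : ℕ} (hle : plen N ≤ r) (hr : r ≤ plen N + l) :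
    ∃ M, IsPartition M ∧ IsLRegular l M ∧ removeLEdge l M = N ∧ plen M = r := by
  obtain ⟨k, q, h⟩ := exists_isPreimageTail hN hle hl
  induction k using Nat.strong_induction_on generalizing q with
  | _ k ih =>
    rcases k.eq_zero_or_pos with rfl | hk
    · exact ⟨q, h.isPartition, h.isLRegular, h.removeLEdge_eq, h.plen_add⟩
    · obtain ⟨s, hsk, Q, hQ⟩ := h.exists_lt hl hN hNr hr hk
      exact ih s hsk Q hQ

theorem mullAux_spec (hl : 2 ≤ l) (n : ℕ) {p : ℕ → ℕ} (hp : IsPartition p)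
    (hr : IsLRegular l p) (hn : pdeg p ≤ n) :
    IsPartition (mullAux l n p) ∧ IsLRegular l (mullAux l n p) ∧
      plen (mullAux l n p) = mullLen l p := by
  have hl0 : 0 < l := by omega
  induction n generalizing p with
  | zero =>
    have h0 : p 0 = 0 := by_contra fun h0 => by
      have := hp.pdeg_removeLEdge_lt hl0 h0
      omega
    exact ⟨isPartition_zero, isLRegular_zero l, plen_zero.trans (hp.mullLen_eq_zero hl0 h0).symm⟩
  | succ n ih =>
    rw [mullAux]
    split_ifs with h0
    · exact ⟨isPartition_zero, isLRegular_zero l,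
        plen_zero.trans (hp.mullLen_eq_zero hl0 h0).symm⟩
    · have := hp.pdeg_removeLEdge_lt hl0 h0
      obtain ⟨hM, hMr, hMlen⟩ := ih (hp.isPartition_removeLEdge hl0)
        (hp.isLRegular_removeLEdge hl hr) (by omega)
      have hbound := hp.mullLen_removeLEdge hl0
      have hspec := Classical.epsilon_spec <|
        hM.exists_removeLEdge_eq hl hMr (hMlen.trans_le hbound.1) (by rw [hMlen]; exact hbound.2)
      exact ⟨hspec.1, hspec.2.1, hspec.2.2.2⟩

theorem plen_mull (hl : 2 ≤ l) {p : ℕ → ℕ} (hp : IsPartition p) (hr : IsLRegular l p) :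
    plen (mull l p) = mullLen l p := (mullAux_spec hl _ hp hr le_rfl).2.2

end Prepend

/-! ### Removing a node -/

section RemoveNode

variable {l i j : ℕ} {P : ℕ → ℕ}

theorem removeNode_self (P : ℕ → ℕ) (i : ℕ) : removeNode P i i = P i - 1 := if_pos rfl

theorem removeNode_of_ne (P : ℕ → ℕ) (h : j ≠ i) : removeNode P i j = P j := if_neg h

theorem removeNode_le (P : ℕ → ℕ) (i j : ℕ) : removeNode P i j ≤ P j := by
  rw [removeNode]
  split_ifs with h
  · exact h ▸ Nat.sub_le _ _
  · exact le_rfl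

theorem le_removeNode_add_one (P : ℕ → ℕ) (i j : ℕ) : P j ≤ removeNode P i j + 1 := by
  rw [removeNode]
  split_ifs with h
  · subst h
    omega
  · exact Nat.le_succ _

theorem dropRows_removeNode_of_lt {g : ℕ} (P : ℕ → ℕ) (h : i < g) :
    dropRows (removeNode P i) g = dropRows P g :=
  funext fun _ => removeNode_of_ne P (by omega)

theorem dropRows_removeNode_add (P : ℕ → ℕ) (i g : ℕ) :
    dropRows (removeNode P (i + g)) g = removeNode (dropRows P g) i := by
  funext j
  simp only [dropRows_apply, removeNode, Nat.add_right_cancel_iff]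

theorem IsPartition.isPartition_removeNode (hP : IsPartition P) (hi : Removable P i) :
    IsPartition (removeNode P i) := by
  refine isPartition_of_antitone (antitone_nat_of_succ_le fun n => ?_) (n := plen P)
    (Nat.eq_zero_of_le_zero ((removeNode_le P i _).trans_eq (hP.plen_le_iff.1 le_rfl)))
  have hle := removeNode_le P i (n + 1)
  by_cases hn : n = i
  · subst hn
    rw [removeNode_self]
    rw [Removable] at hi
    omega
  · rw [removeNode_of_ne P hn]
    exact hle.trans (hP.antitone n.le_succ)

theorem IsPartition.plen_removeNode (hP : IsPartition P) (hi : Removable P i)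
    (hne : P (i + 1) ≠ 0) : plen (removeNode P i) = plen P := by
  refine plen_eq_of (Nat.eq_zero_of_le_zero
    ((removeNode_le P i _).trans_eq (hP.plen_le_iff.1 le_rfl))) fun j hj => ?_
  have := hP.lt_plen_iff.1 hj
  by_cases hji : j = i
  · subst hji
    rw [removeNode_self]
    rw [Removable] at hi
    omega
  · rwa [removeNode_of_ne P hji]

theorem IsPartition.isLRegular_removeNode (hl : 2 ≤ l) (hP : IsPartition P)
    (hr : IsLRegular l P) (hi : Removable P i) (hne : P (i + l - 1) + 1 ≠ P i) :
    IsLRegular l (removeNode P i) := by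
  rw [Removable] at hi
  intro j hj heq
  by_cases hji : j = i
  · subst hji
    rw [removeNode_self, removeNode_of_ne P (by omega)] at heq
    omega
  · rw [removeNode_of_ne P hji] at hj heq
    by_cases hlast : j + l - 1 = i
    · have := hP.antitone (by omega : j ≤ i)
      rw [hlast, removeNode_self] at heq
      omega
    · rw [removeNode_of_ne P hlast] at heq
      exact hr j hj heq

end RemoveNode

/-! ### Edge-disconnected partitions -/

section Disconnected

variable {l m ρ : ℕ} {P : ℕ → ℕ}

theorem IsPartition.elen_eq_add (hl : 0 < l) (hP : IsPartition P) {h : ℕ} (hpos : 0 < h)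
    (hne : P h ≠ 0) (hle : l + P h ≤ P 0 + h) (hlt : ∀ i, 0 < i → i < h → P 0 + i < l + P i) :
    elen l P = l + elen l (dropRows P h) := by
  have hseg := hP.firstSeg_eq hpos hle hlt
  have hlong := hP.lt_add_plen_of_apply_firstSeg_ne_zero (l := l) (by rwa [hseg])
  rw [hP.elen_of_long hl hlong, hseg]

theorem IsPartition.firstSeg_lt (hl : 2 ≤ l) (hP : IsPartition P) (hr : IsLRegular l P)
    (h0 : P 0 ≠ 0) : firstSeg l P < l := by
  refine (firstSeg_le (by omega) P).lt_of_ne fun heq => hr 0 h0 ?_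
  have := hP.add_lt_of_lt_firstSeg (l := l) (by omega : 0 < 0 + l - 1) (by omega)
  have := hP.antitone (Nat.zero_le (0 + l - 1))
  omega

theorem IsPartition.lt_firstSeg (hl : 2 ≤ l) (hP : IsPartition P) (hr : IsLRegular l P)
    (h0 : P 0 ≠ 0) (hm : P m = P 0) : m < firstSeg l P := by
  have := hP.firstSeg_lt hl hr h0
  have := hP.add_apply_firstSeg_le l
  by_contra! hc
  have := hP.antitone hc
  omega

/-- Going down the segments of `P`, the first `m + 1` rows of each segment have equal parts, as long
as consecutive segments are linked (`P 0 + h = l + P h`), and a gap between two segments is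
eventually reached. -/
inductive RunsToGap (l m : ℕ) : (ℕ → ℕ) → Prop
  | gap {P : ℕ → ℕ} : P m = P 0 → P (firstSeg l P) ≠ 0 →
      l + P (firstSeg l P) < P 0 + firstSeg l P → RunsToGap l m P
  | step {P : ℕ → ℕ} : P m = P 0 → P 0 + firstSeg l P = l + P (firstSeg l P) →
      RunsToGap l m (dropRows P (firstSeg l P)) → RunsToGap l m P

theorem RunsToGap.apply_eq (h : RunsToGap l m P) : P m = P 0 := by
  cases h <;> assumption

theorem RunsToGap.apply_zero_ne_zero (h : RunsToGap l m P) (hP : IsPartition P) : P 0 ≠ 0 := by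
  induction h with
  | @gap P _ hne _ =>
    have := hP.antitone (Nat.zero_le (firstSeg l P))
    omega
  | @step P _ _ _ ih =>
    have := ih (hP.drop _)
    have := hP.antitone (Nat.zero_le (firstSeg l P))
    rw [dropRows_apply_zero] at *
    omega

theorem RunsToGap.apply_firstSeg_ne_zero (h : RunsToGap l m P) (hP : IsPartition P) :
    P (firstSeg l P) ≠ 0 := by
  cases h with
  | gap _ hne _ => exact hne
  | step _ _ htail =>
    have := htail.apply_zero_ne_zero (hP.drop _)
    rwa [dropRows_apply_zero] at this

theorem RunsToGap.mono (h : RunsToGap l m P) (hP : IsPartition P) {k : ℕ} (hk : k ≤ m) :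
    RunsToGap l k P := by
  have heq : ∀ {P : ℕ → ℕ}, IsPartition P → P m = P 0 → P k = P 0 := fun hP hm =>
    le_antisymm (hP.antitone (Nat.zero_le k)) (hm ▸ hP.antitone hk)
  induction h with
  | gap hm hne hgap => exact .gap (heq hP hm) hne hgap
  | step hm hlink _ ih => exact .step (heq hP hm) hlink (ih (hP.drop _))

theorem RunsToGap.elen_dropRows_one (hl : 0 < l) (h : RunsToGap l 1 P) (hP : IsPartition P) :
    elen l (dropRows P 1) = elen l P := by
  induction h with
  | @gap P h1 hne hgap =>
    have hle := firstSeg_le hl P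
    have hpos := firstSeg_pos l P
    have h2 : firstSeg l P ≠ 1 := fun h => by rw [h, h1] at hgap; omega
    have hsub : firstSeg l P - 1 + 1 = firstSeg l P := by omega
    rw [(hP.drop 1).elen_eq_add hl (h := firstSeg l P - 1), dropRows_dropRows, Nat.add_comm 1,
      hsub, hP.elen_of_long hl (hP.lt_add_plen_of_apply_firstSeg_ne_zero hne)]
    · omega
    · rwa [dropRows_apply, hsub]
    · rw [dropRows_apply, hsub, dropRows_apply_zero, h1]
      omega
    · intro i _ hi
      have := hP.add_lt_of_lt_firstSeg (l := l) (by omega : 0 < i + 1) (by omega)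
      rw [dropRows_apply_zero, dropRows_apply, h1]
      omega
  | @step P h1 hlink htail ih =>
    have hne := htail.apply_zero_ne_zero (hP.drop _)
    have hnext := htail.apply_eq
    rw [dropRows_apply_zero] at hne hnext
    rw [dropRows_apply, Nat.add_comm] at hnext
    rw [(hP.drop 1).elen_eq_add hl (firstSeg_pos l P), dropRows_dropRows,
      hP.elen_of_long hl (hP.lt_add_plen_of_apply_firstSeg_ne_zero hne), ← ih (hP.drop _),
      dropRows_dropRows, Nat.add_comm 1]
    · rwa [dropRows_apply, hnext]
    · rw [dropRows_apply_zero, dropRows_apply, hnext, h1]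
      exact hlink.ge
    · intro i _ hi
      rw [dropRows_apply_zero, dropRows_apply, h1]
      rcases Nat.lt_or_ge (i + 1) (firstSeg l P) with hlt | hge
      · have := hP.add_lt_of_lt_firstSeg (by omega : 0 < i + 1) hlt
        omega
      · rw [show i + 1 = firstSeg l P by omega]
        omega

/-- Among the segments before the first gap, let `m + 1` be the least number of rows equal to the
first row of a segment; the last segment where it is attained has its `m + 1`-st row in row `ρ` of
`P`. -/
inductive IsMinRunEnd (l m : ℕ) : (ℕ → ℕ) → ℕ → Prop
  | gap {P : ℕ → ℕ} : P m = P 0 → P (m + 1) < P 0 → P (firstSeg l P) ≠ 0 →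
      l + P (firstSeg l P) < P 0 + firstSeg l P → IsMinRunEnd l m P m
  | link {P : ℕ → ℕ} : P m = P 0 → P (m + 1) < P 0 →
      P 0 + firstSeg l P = l + P (firstSeg l P) →
      RunsToGap l (m + 1) (dropRows P (firstSeg l P)) → IsMinRunEnd l m P m
  | step {P : ℕ → ℕ} {ρ : ℕ} : P m = P 0 → P 0 + firstSeg l P = l + P (firstSeg l P) →
      IsMinRunEnd l m (dropRows P (firstSeg l P)) ρ → IsMinRunEnd l m P (ρ + firstSeg l P)

theorem IsMinRunEnd.runsToGap (h : IsMinRunEnd l m P ρ) (hP : IsPartition P) :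
    RunsToGap l m P := by
  induction h with
  | gap hm _ hne hgap => exact .gap hm hne hgap
  | link hm _ hlink htail => exact .step hm hlink (htail.mono (hP.drop _) m.le_succ)
  | step hm hlink _ ih => exact .step hm hlink (ih (hP.drop _))

theorem IsPartition.exists_run (hP : IsPartition P) (h0 : P 0 ≠ 0) :
    ∃ m, P m = P 0 ∧ P (m + 1) < P 0 := by
  by_contra! hc
  have hconst : ∀ n, P n = P 0 := fun n => by
    induction n with
    | zero => rfl
    | succ n ih => exact le_antisymm (hP.antitone (Nat.zero_le _)) (hc n ih)
  exact h0 ((hconst (plen P)).symm.trans (hP.plen_le_iff.1 le_rfl))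

theorem IsPartition.apply_firstSeg_ne_zero_of_lt_elen (hl : 0 < l) (hP : IsPartition P)
    (he : l < elen l P) : P (firstSeg l P) ≠ 0 := fun h0 => by
  rcases Nat.lt_or_ge l (P 0 + plen P) with hlong | hs
  · have htail := hP.plen_dropRows (firstSeg l P)
    have := hP.plen_le_iff.2 h0
    rw [hP.elen_of_long hl hlong,
      (hP.drop _).elen_of_short (by rw [dropRows_apply_zero]; omega), dropRows_apply_zero] at he
    omega
  · rw [hP.elen_of_short hs] at he
    omega

theorem IsPartition.exists_isMinRunEnd (hl : 0 < l) (hP : IsPartition P) {n : ℕ}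
    (hdisc : ¬ edgeConnAux l n P) : ∃ m ρ, IsMinRunEnd l m P ρ := by
  induction n generalizing P with
  | zero => exact absurd trivial hdisc
  | succ n ih =>
    rw [edgeConnAux] at hdisc
    split_ifs at hdisc with he
    · exact absurd trivial hdisc
    have hne := hP.apply_firstSeg_ne_zero_of_lt_elen hl (not_le.1 he)
    have := hP.antitone (Nat.zero_le (firstSeg l P))
    obtain ⟨m, hm, hdrop⟩ := hP.exists_run (by omega)
    by_cases hlink : P 0 + firstSeg l P = l + P (firstSeg l P)
    · obtain ⟨k, ρ, hk⟩ := ih (hP.drop (firstSeg l P)) fun h => hdisc ⟨hlink, h⟩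
      have htail := hk.runsToGap (hP.drop _)
      rcases Nat.lt_or_ge m k with hmk | hkm
      · exact ⟨m, m, .link hm hdrop hlink (htail.mono (hP.drop _) hmk)⟩
      · have hPk := le_antisymm (hP.antitone (Nat.zero_le k)) (hm ▸ hP.antitone hkm)
        exact ⟨k, ρ + firstSeg l P, .step hPk hlink hk⟩
    · have := hP.add_apply_firstSeg_le l
      exact ⟨m, m, .gap hm hdrop hne (by omega)⟩

theorem IsMinRunEnd.removable (h : IsMinRunEnd l m P ρ) : Removable P ρ := by
  induction h with
  | gap hm hdrop => exact hdrop.trans_eq hm.symm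
  | link hm hdrop => exact hdrop.trans_eq hm.symm
  | step _ _ _ ih => rwa [Removable, dropRows_apply, dropRows_apply, Nat.add_right_comm] at ih

theorem IsMinRunEnd.apply_add_one_ne_zero (hl : 2 ≤ l) (h : IsMinRunEnd l m P ρ)
    (hP : IsPartition P) (hr : IsLRegular l P) : P (ρ + 1) ≠ 0 := by
  have head : ∀ {Q : ℕ → ℕ}, IsPartition Q → IsLRegular l Q → RunsToGap l m Q →
      Q (m + 1) ≠ 0 := fun {Q} hP hr hrun => by
    have hlt : m + 1 ≤ firstSeg l Q :=
      hP.lt_firstSeg hl hr (hrun.apply_zero_ne_zero hP) hrun.apply_eq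
    have := hP.antitone hlt
    have := hrun.apply_firstSeg_ne_zero hP
    omega
  induction h with
  | gap hm _ hne hgap => exact head hP hr (.gap hm hne hgap)
  | link hm hdrop hlink htail =>
    exact head hP hr (IsMinRunEnd.link hm hdrop hlink htail |>.runsToGap hP)
  | @step P ρ _ _ _ ih =>
    have := ih (hP.drop _) (hr.drop (by omega) _)
    rwa [dropRows_apply, Nat.add_right_comm] at this

theorem IsMinRunEnd.apply_add_sub_one_add_one_ne (hl : 2 ≤ l) (h : IsMinRunEnd l m P ρ)
    (hP : IsPartition P) (hr : IsLRegular l P) : P (ρ + l - 1) + 1 ≠ P ρ := by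
  have htail0 : ∀ {P : ℕ → ℕ}, IsPartition P → IsLRegular l P → RunsToGap l m P →
      P (m + l - 1) ≤ P (firstSeg l P) := fun hP hr hrun => by
    have := hP.firstSeg_lt hl hr (hrun.apply_zero_ne_zero hP)
    exact hP.antitone (by omega)
  induction h with
  | @gap P hm hdrop hne hgap =>
    have := htail0 hP hr (.gap hm hne hgap)
    have := hP.firstSeg_lt hl hr (by omega)
    omega
  | @link P hm hdrop hlink htail =>
    intro heq
    have := htail0 hP hr (IsMinRunEnd.link hm hdrop hlink htail |>.runsToGap hP)
    have hlt := hP.firstSeg_lt hl hr (by omega)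
    have hflat := htail.apply_eq
    rw [dropRows_apply_zero, dropRows_apply,
      show m + 1 + firstSeg l P = m + 1 + l - 1 by omega] at hflat
    have := hP.antitone (by omega : m + 1 ≤ m + 1 + l - 1)
    have := (htail.apply_zero_ne_zero (hP.drop _))
    rw [dropRows_apply_zero] at this
    exact hr (m + 1) (by omega) (by omega)
  | @step P ρ _ _ _ ih =>
    have := ih (hP.drop _) (hr.drop (by omega) _)
    rwa [dropRows_apply, dropRows_apply,
      show ρ + l - 1 + firstSeg l P = ρ + firstSeg l P + l - 1 by omega] at this

theorem IsMinRunEnd.exists_ladder (h : IsMinRunEnd l m P ρ) :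
    ∃ q, P ρ + m + q * l = P 0 + ρ ∧ ∀ t ≤ q, ∃ j, P j + m + t * l = P 0 + j := by
  induction h with
  | @gap P hm | @link P hm =>
    refine ⟨0, by omega, fun t ht => ⟨m, ?_⟩⟩
    rw [Nat.le_zero.1 ht, hm]
    omega
  | @step P ρ hm hlink _ ih =>
    obtain ⟨q, hq, hladder⟩ := ih
    simp only [dropRows_apply, Nat.zero_add] at hq hladder
    refine ⟨q + 1, by rw [Nat.succ_mul]; omega, fun t ht => ?_⟩
    cases t with
    | zero => exact ⟨m, by omega⟩
    | succ t =>
      obtain ⟨j, hj⟩ := hladder t (by omega)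
      exact ⟨j + firstSeg l P, by rw [Nat.succ_mul]; omega⟩

theorem IsPartition.elen_removeNode_of_le (hl : 2 ≤ l) (hP : IsPartition P) (hr : IsLRegular l P)
    (hm : P m = P 0) (hdrop : P (m + 1) < P 0) (hne : P (firstSeg l P) ≠ 0)
    (hle : l + P (firstSeg l P) ≤ removeNode P m 0 + firstSeg l P) :
    elen l (removeNode P m) = elen l P := by
  have hmlt := hP.lt_firstSeg hl hr (by omega) hm
  have hlt := hP.firstSeg_lt hl hr (by omega)
  have hQ := hP.isPartition_removeNode (i := m) (hdrop.trans_eq hm.symm)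
  have hsame : removeNode P m (firstSeg l P) = P (firstSeg l P) :=
    removeNode_of_ne P hmlt.ne'
  rw [hQ.elen_eq_add (by omega) (firstSeg_pos l P) (by rwa [hsame]) (by rwa [hsame]),
    dropRows_removeNode_of_lt P hmlt,
    hP.elen_of_long (by omega) (hP.lt_add_plen_of_apply_firstSeg_ne_zero hne)]
  intro i hi hih
  have := hP.add_lt_of_lt_firstSeg hi hih
  have := removeNode_le P m 0
  by_cases him : i = m
  · rw [him, removeNode_self]
    omega
  · rw [removeNode_of_ne P him]
    omega

theorem IsPartition.elen_removeNode_zero (hl : 0 < l) (hP : IsPartition P) (hdrop : P 1 < P 0)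
    (hlink : P 0 + firstSeg l P = l + P (firstSeg l P))
    (htail : RunsToGap l 1 (dropRows P (firstSeg l P))) :
    elen l (removeNode P 0) = elen l P := by
  have hne := htail.apply_zero_ne_zero (hP.drop _)
  have hflat := htail.apply_eq
  rw [dropRows_apply_zero] at hne hflat
  rw [dropRows_apply, Nat.add_comm] at hflat
  have hQ := hP.isPartition_removeNode (i := 0) hdrop
  rw [hQ.elen_eq_add hl (h := firstSeg l P + 1) (by omega),
    dropRows_removeNode_of_lt P (by omega), ← dropRows_dropRows,
    htail.elen_dropRows_one hl (hP.drop _),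
    hP.elen_of_long hl (hP.lt_add_plen_of_apply_firstSeg_ne_zero hne)]
  · rwa [removeNode_of_ne P (Nat.succ_ne_zero _), hflat]
  · rw [removeNode_of_ne P (Nat.succ_ne_zero _), removeNode_self, hflat]
    omega
  · intro i hi hih
    rw [removeNode_of_ne P hi.ne', removeNode_self]
    rcases (Nat.lt_succ_iff.1 hih).lt_or_eq with hlt | rfl
    · have := hP.add_lt_of_lt_firstSeg hi hlt
      omega
    · omega

theorem IsMinRunEnd.elen_removeNode (hl : 2 ≤ l) (h : IsMinRunEnd l m P ρ)
    (hP : IsPartition P) (hr : IsLRegular l P) : elen l (removeNode P ρ) = elen l P := by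
  induction h with
  | @gap P hm hdrop hne hgap =>
    refine hP.elen_removeNode_of_le hl hr hm hdrop hne ?_
    have := le_removeNode_add_one P m 0
    omega
  | @link P hm hdrop hlink htail =>
    rcases Nat.eq_zero_or_pos m with rfl | hpos
    · exact hP.elen_removeNode_zero (by omega) hdrop hlink htail
    · have hne := htail.apply_zero_ne_zero (hP.drop _)
      rw [dropRows_apply_zero] at hne
      refine hP.elen_removeNode_of_le hl hr hm hdrop hne ?_
      rw [removeNode_of_ne P hpos.ne]
      exact hlink.ge
  | @step P ρ hm hlink htail ih =>
    have h := IsMinRunEnd.step hm hlink htail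
    have hpos := firstSeg_pos l P
    have hQ := hP.isPartition_removeNode h.removable
    have hne : removeNode P (ρ + firstSeg l P) (firstSeg l P) ≠ 0 := fun h0 => by
      have := hQ.antitone (by omega : firstSeg l P ≤ ρ + firstSeg l P + 1)
      rw [h0, removeNode_of_ne P (by omega)] at this
      exact h.apply_add_one_ne_zero hl hP hr (Nat.le_zero.1 this)
    have hle := removeNode_le P (ρ + firstSeg l P) (firstSeg l P)
    have hPne : P (firstSeg l P) ≠ 0 := fun h0 => hne (Nat.le_zero.1 (h0 ▸ hle))
    rw [hQ.elen_eq_add (by omega) hpos hne, dropRows_removeNode_add,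
      ih (hP.drop _) (hr.drop (by omega) _),
      hP.elen_of_long (by omega) (hP.lt_add_plen_of_apply_firstSeg_ne_zero hPne)]
    · rw [removeNode_of_ne P (by omega : 0 ≠ ρ + firstSeg l P)]
      omega
    · intro i hi hih
      rw [removeNode_of_ne P (by omega : 0 ≠ ρ + firstSeg l P),
        removeNode_of_ne P (by omega : i ≠ ρ + firstSeg l P)]
      exact hP.add_lt_of_lt_firstSeg hi hih

theorem IsMinRunEnd.isLRegular_removeNode (hl : 2 ≤ l) (h : IsMinRunEnd l m P ρ)
    (hP : IsPartition P) (hr : IsLRegular l P) : IsLRegular l (removeNode P ρ) :=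
  hP.isLRegular_removeNode hl hr h.removable (h.apply_add_sub_one_add_one_ne hl hP hr)

theorem IsMinRunEnd.plen_mull_removeNode (hl : 2 ≤ l) (h : IsMinRunEnd l m P ρ)
    (hP : IsPartition P) (hr : IsLRegular l P) :
    plen (mull l (removeNode P ρ)) = plen (mull l P) := by
  rw [plen_mull hl hP hr, plen_mull hl (hP.isPartition_removeNode h.removable)
    (h.isLRegular_removeNode hl hP hr), mullLen, mullLen, h.elen_removeNode hl hP hr,
    hP.plen_removeNode h.removable (h.apply_add_one_ne_zero hl hP hr)]

end Disconnected

/-! ### Conjugate partitions and suitable nodes -/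

section Conjugate

variable {l m ρ i j : ℕ} {p q : ℕ → ℕ}

theorem IsPartition.lt_conjP_iff (hp : IsPartition p) : i < conjP p j ↔ j < p i := by
  have hsub : IsPartition fun i => p i - j :=
    isPartition_of_antitone (fun _ _ h => Nat.sub_le_sub_right (hp.antitone h) j) (n := plen p)
      (by rw [hp.plen_le_iff.1 le_rfl, Nat.zero_sub])
  have hiff : ∀ i, i < plen (fun i => p i - j) ↔ j < p i := fun i =>
    hsub.lt_plen_iff.trans Nat.sub_ne_zero_iff_lt
  have hfilter : ((Finset.range (plen p)).filter fun i => j < p i) =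
      Finset.range (plen fun i => p i - j) := by
    ext i
    rw [Finset.mem_filter, Finset.mem_range, Finset.mem_range, hiff, hp.lt_plen_iff,
      and_iff_right_iff_imp]
    exact Nat.ne_zero_of_lt
  rw [conjP, hfilter, Finset.card_range, hiff]

theorem IsPartition.isPartition_conjP (hp : IsPartition p) : IsPartition (conjP p) := by
  refine isPartition_of_antitone (fun i j hij => le_of_forall_lt fun k hk => ?_) (n := p 0) ?_
  · exact hp.lt_conjP_iff.2 (hij.trans_lt (hp.lt_conjP_iff.1 hk))
  · exact Nat.eq_zero_of_not_pos fun h => (hp.lt_conjP_iff.1 h).false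

theorem IsPartition.conjP_conjP (hp : IsPartition p) : conjP (conjP p) = p :=
  funext fun _ => eq_of_forall_lt_iff fun _ =>
    hp.isPartition_conjP.lt_conjP_iff.trans hp.lt_conjP_iff

theorem IsPartition.conjP_zero (hp : IsPartition p) : conjP p 0 = plen p :=
  eq_of_forall_lt_iff fun _ =>
    hp.lt_conjP_iff.trans (Nat.pos_iff_ne_zero.trans hp.lt_plen_iff.symm)

theorem IsPartition.isLRegular_conjP (hl : 0 < l) (hp : IsPartition p)
    (hres : IsLRestricted l p) : IsLRegular l (conjP p) := by
  intro s hs heq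
  have hlast : s + l - 1 < p (conjP p s - 1) := hp.lt_conjP_iff.1 (by omega)
  have hnext : p (conjP p s) ≤ s := not_lt.1 fun h => (hp.lt_conjP_iff.2 h).false
  have hdiff := hres (conjP p s - 1)
  rw [Nat.sub_add_cancel (Nat.pos_of_ne_zero hs)] at hdiff
  omega

-- The beads `p j - j` and the beads `s + 1 - conjP p s` are complementary.
theorem IsPartition.conjP_add_ne (hp : IsPartition p) (s j : ℕ) : conjP p s + p j ≠ s + j + 1 := by
  have := hp.lt_conjP_iff (i := j) (j := s)
  omega

theorem IsPartition.apply_conjP_sub_one (hp : IsPartition p) (h : Removable (conjP p) ρ) :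
    p (conjP p ρ - 1) = ρ + 1 := by
  rw [Removable] at h
  have hlt : ρ < p (conjP p ρ - 1) := hp.lt_conjP_iff.1 (by omega)
  have hge : ¬ ρ + 1 < p (conjP p ρ - 1) := fun h' => by
    have := hp.lt_conjP_iff.2 h'
    omega
  omega

theorem IsPartition.isLRestricted_removeNode (hl : 2 ≤ l) (hp : IsPartition p)
    (hres : IsLRestricted l p) (h : Removable (conjP p) ρ)
    (hne : conjP p (ρ + l - 1) + 1 ≠ conjP p ρ) :
    IsLRestricted l (removeNode p (conjP p ρ - 1)) := by
  have hi := hp.apply_conjP_sub_one h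
  rw [Removable] at h
  intro k
  have hk := hres k
  by_cases hki : k + 1 = conjP p ρ - 1
  · rw [hki, removeNode_self, hi, removeNode_of_ne p (by omega)]
    by_contra! hc
    have := hp.lt_conjP_iff.2 (by omega : ρ + l - 1 < p k)
    have := hp.isPartition_conjP.antitone (by omega : ρ + 1 ≤ ρ + l - 1)
    omega
  · rw [removeNode_of_ne p hki]
    have := removeNode_le p (conjP p ρ - 1) k
    omega

theorem IsMinRunEnd.not_modEq (hl : 2 ≤ l) (hp : IsPartition p) (hres : IsLRestricted l p)
    (h : IsMinRunEnd l m (conjP p) ρ) (hij : conjP p ρ ≤ j) (hj : j ≤ plen p) :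
    ¬ (p j - j : ℤ) ≡ ρ + 1 - conjP p ρ [ZMOD l] := by
  intro hmod
  have hP := hp.isPartition_conjP
  have hr := hp.isLRegular_conjP (by omega) hres
  have hrun := h.runsToGap hP
  have h0 := hrun.apply_zero_ne_zero hP
  have hml := hP.lt_firstSeg hl hr h0 hrun.apply_eq
  have hsl := hP.firstSeg_lt hl hr h0
  obtain ⟨q, hq, hladder⟩ := h.exists_ladder
  rw [← hp.conjP_zero] at hj
  have hpj : p j ≤ ρ := not_lt.1 fun hc => (hp.lt_conjP_iff.2 hc).not_ge hij
  obtain ⟨c, hc⟩ := hmod.symm.dvd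
  have ht : (conjP p 0 : ℤ) - m - (j - p j + 1) = l * (q + c) := by
    have : (conjP p ρ : ℤ) + m + q * l = conjP p 0 + ρ := mod_cast hq
    linarith
  have hnonneg : 0 ≤ q + c := by
    by_contra! hneg
    have : (l : ℤ) * (q + c) ≤ l * (-1) := mul_le_mul_of_nonneg_left (by omega) (by omega)
    omega
  have hc0 : c ≤ 0 := by
    by_contra! hpos
    have : (l : ℤ) * 1 ≤ l * c := mul_le_mul_of_nonneg_left hpos (by omega)
    omega
  obtain ⟨t, ht'⟩ := Int.eq_ofNat_of_zero_le hnonneg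
  obtain ⟨s, hs⟩ := hladder t (by omega)
  refine hp.conjP_add_ne s j ?_
  have hs' : (conjP p s : ℤ) + m + t * l = conjP p 0 + s := mod_cast hs
  rw [ht'] at ht
  zify
  linarith

theorem IsMinRunEnd.suitable_add_mul (hl : 2 ≤ l) (hp : IsPartition p) (hres : IsLRestricted l p)
    (h : IsMinRunEnd l m (conjP p) ρ) (hq : IsPartition q) (hlen : plen q ≤ plen p) :
    Suitable l (fun k => p k + l * q k) (conjP p ρ - 1) := by
  have hrem := h.removable
  have hi := hp.apply_conjP_sub_one hrem
  rw [Removable] at hrem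
  refine ⟨?_, fun j hij hj hmod => h.not_modEq hl hp hres (j := j) (by omega) ?_ ?_⟩
  · have hnext : p (conjP p ρ - 1 + 1) ≤ ρ := not_lt.1 fun hc => by
      have := hp.lt_conjP_iff.2 hc
      omega
    have := Nat.mul_le_mul_left l (hq.antitone (Nat.le_succ (conjP p ρ - 1)))
    exact Nat.add_lt_add_of_lt_of_le (by omega) this
  · refine hj.1.trans (plen_le_of_eq_zero ?_)
    rw [hp.plen_le_iff.1 le_rfl, hq.plen_le_iff.1 hlen, Nat.mul_zero]
  · have hcong : ∀ k, ((p k + l * q k : ℕ) : ℤ) ≡ p k [ZMOD l] := fun k => by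
      simp [Int.ModEq]
    have := ((hcong j).symm.sub_right j).trans (hmod.trans (((hcong _).sub_right _).sub_right 1))
    rw [hi] at this
    convert this using 1
    omega

end Conjugate

theorem exists_suitable_of_conj_disconnected_general (l : ℕ) (hl : 2 ≤ l) (p0 : ℕ → ℕ)
    (hp0 : IsPartition p0) (hres : IsLRestricted l p0)
    (hdisc : ¬ EdgeLConnected l (conjP p0)) :
    ∃ i : ℕ,
      (∀ pb, IsPartition pb → plen pb ≤ plen p0 → Suitable l (fun k => p0 k + l * pb k) i) ∧
      IsLRestricted l (removeNode p0 i) ∧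
      CoSuitable l (conjP p0) (p0 i - 1) ∧
      IsLRegular l (removeNode (conjP p0) (p0 i - 1)) ∧
      plen (mull l (conjP p0)) = plen (mull l (removeNode (conjP p0) (p0 i - 1))) := by
  have hP := hp0.isPartition_conjP
  have hr := hp0.isLRegular_conjP (by omega) hres
  obtain ⟨m, ρ, h⟩ := hP.exists_isMinRunEnd (by omega) hdisc
  have hi := hp0.apply_conjP_sub_one h.removable
  have hsuit := fun pb => h.suitable_add_mul hl hp0 hres (q := pb)
  have hsuit0 : Suitable l p0 (conjP p0 ρ - 1) := by
    simpa using hsuit (fun _ => 0) isPartition_zero (plen_zero.trans_le (Nat.zero_le _))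
  refine ⟨conjP p0 ρ - 1, hsuit, hp0.isLRestricted_removeNode hl hres h.removable
    (h.apply_add_sub_one_add_one_ne hl hP hr), ?_⟩
  rw [hi, Nat.add_sub_cancel]
  exact ⟨⟨h.removable, by rwa [hp0.conjP_conjP]⟩, h.isLRegular_removeNode hl hP hr,
    (h.plen_mull_removeNode hl hP hr).symm⟩

/-- Let `λ = λ⁰ + lλ̄` be a non-`l`-restricted partition (`λ̄ ≠ 0`) with `λ⁰`
`l`-restricted, `λ̄` a partition, and `ℓ(λ̄) ≤ ℓ(λ⁰)`; set `μ = (λ⁰)'` and assume `μ` is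
edge `l`-disconnected. Then there is a row `i` such that: `S = (i, λ_i)` is a suitable
node of `λ`, `S₀ = (i, λ⁰_i)` is a suitable node of `λ⁰`, `(λ⁰)_{S₀}` is `l`-restricted,
and `R = (λ⁰_i, i)` is a co-suitable node of `μ` with `μ_R` `l`-regular and
`ℓ(Mull(μ)) = ℓ(Mull(μ_R))`. -/
theorem exists_suitable_of_conj_disconnected (l : ℕ) (hl : 2 ≤ l) (p0 pb : ℕ → ℕ)
    (hp0 : IsPartition p0) (hres : IsLRestricted l p0)
    (hpb : IsPartition pb) (hpbne : pb 0 ≠ 0)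
    (hlen : plen pb ≤ plen p0)
    (hdisc : ¬ EdgeLConnected l (conjP p0)) :
    ∃ i : ℕ,
      Suitable l (fun k => p0 k + l * pb k) i ∧
      Suitable l p0 i ∧
      IsLRestricted l (removeNode p0 i) ∧
      CoSuitable l (conjP p0) (p0 i - 1) ∧
      IsLRegular l (removeNode (conjP p0) (p0 i - 1)) ∧
      plen (mull l (conjP p0)) = plen (mull l (removeNode (conjP p0) (p0 i - 1))) := by
  obtain ⟨i, hsuit, h⟩ := exists_suitable_of_conj_disconnected_general l hl p0 hp0 hres hdisc
  have hsuit0 := hsuit (fun _ => 0) isPartition_zero (plen_zero.trans_le (Nat.zero_le _))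
  exact ⟨i, hsuit pb hpb hlen, by simpa using hsuit0, h⟩

end
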